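/- Let H be a real Hilbert space, X a set, Φ : X → H a feature map, and P the orthogonal projection of H onto a finite-dimensional subspace V ⊆ H. Let x_1,…,x_N ∈ X and let w, v ∈ ℝ^N be nonnegative weight vectors each summing to 1. If ‖Σ_{i=1}^N (w_i − v_i) PΦ(x_i)‖ ≤ ε_LP and ‖Φ(x_i) − PΦ(x_i)‖ ≤ ε_nys for every i, then ‖Σ_{i=1}^N (w_i − v_i) Φ(x_i)‖ ≤ 2 ε_nys + ε_LP; equivalently, the quadratic form of the difference vector w − v with respect to the Gram matrix (C(x_i, x_j))_{i,j} = (⟨Φ(x_i), Φ(x_j)⟩)_{i,j} is at most (2 ε_nys + ε_LP)². -/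

import Mathlib

open scoped RealInnerProductSpace

section NormedSpace

variable {ι E : Type*} [SeminormedAddCommGroup E] [NormedSpace ℝ E] {s : Finset ι}
  {w v : ι → ℝ} {f g : ι → E} {δ ε : ℝ}

theorem norm_sum_smul_le_sum_mul (hw : ∀ i ∈ s, 0 ≤ w i) (hf : ∀ i ∈ s, ‖f i‖ ≤ ε) :
    ‖∑ i ∈ s, w i • f i‖ ≤ (∑ i ∈ s, w i) * ε := by
  rw [Finset.sum_mul]
  refine norm_sum_le_of_le s fun i hi => ?_
  rw [norm_smul_of_nonneg (hw i hi)]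
  exact mul_le_mul_of_nonneg_left (hf i hi) (hw i hi)

theorem norm_sum_sub_smul_le_sum_add_sum_mul (hw : ∀ i ∈ s, 0 ≤ w i) (hv : ∀ i ∈ s, 0 ≤ v i)
    (hf : ∀ i ∈ s, ‖f i‖ ≤ ε) :
    ‖∑ i ∈ s, (w i - v i) • f i‖ ≤ (∑ i ∈ s, w i + ∑ i ∈ s, v i) * ε := by
  simp_rw [sub_smul, Finset.sum_sub_distrib, add_mul]
  exact norm_sub_le_of_le (norm_sum_smul_le_sum_mul hw hf) (norm_sum_smul_le_sum_mul hv hf)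

theorem norm_sum_sub_smul_le_of_norm_sub_le (hw : ∀ i ∈ s, 0 ≤ w i) (hv : ∀ i ∈ s, 0 ≤ v i)
    (hg : ‖∑ i ∈ s, (w i - v i) • g i‖ ≤ δ) (hfg : ∀ i ∈ s, ‖f i - g i‖ ≤ ε) :
    ‖∑ i ∈ s, (w i - v i) • f i‖ ≤ (∑ i ∈ s, w i + ∑ i ∈ s, v i) * ε + δ := by
  have hsplit : ∑ i ∈ s, (w i - v i) • f i =
      ∑ i ∈ s, (w i - v i) • (f i - g i) + ∑ i ∈ s, (w i - v i) • g i := by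
    simp_rw [← Finset.sum_add_distrib, ← smul_add, sub_add_cancel]
  rw [hsplit]
  exact norm_add_le_of_le (norm_sum_sub_smul_le_sum_add_sum_mul hw hv hfg) hg

end NormedSpace

section InnerProductSpace

variable {ι E : Type*} [SeminormedAddCommGroup E] [InnerProductSpace ℝ E]

theorem sum_sum_mul_inner_eq_norm_sq (s : Finset ι) (a : ι → ℝ) (f : ι → E) :
    ∑ i ∈ s, ∑ j ∈ s, a i * a j * ⟪f i, f j⟫ = ‖∑ i ∈ s, a i • f i‖ ^ 2 := by
  simp_rw [← real_inner_self_eq_norm_sq, sum_inner, inner_sum, real_inner_smul_left,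
    real_inner_smul_right, mul_assoc]

/-- For `f i = Φ (x i)` and `g i` its projection, the factor `2` of the Nyström bound is the total
mass of two probability vectors. -/
theorem stmt_4_general {s : Finset ι} {w v : ι → ℝ} {f g : ι → E} {δ ε : ℝ}
    (hw : ∀ i ∈ s, 0 ≤ w i) (hv : ∀ i ∈ s, 0 ≤ v i)
    (hg : ‖∑ i ∈ s, (w i - v i) • g i‖ ≤ δ) (hfg : ∀ i ∈ s, ‖f i - g i‖ ≤ ε) :
    ‖∑ i ∈ s, (w i - v i) • f i‖ ≤ (∑ i ∈ s, w i + ∑ i ∈ s, v i) * ε + δ ∧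
      ∑ i ∈ s, ∑ j ∈ s, (w i - v i) * (w j - v j) * ⟪f i, f j⟫
        ≤ ((∑ i ∈ s, w i + ∑ i ∈ s, v i) * ε + δ) ^ 2 := by
  have hnorm := norm_sum_sub_smul_le_of_norm_sub_le hw hv hg hfg
  refine ⟨hnorm, ?_⟩
  rw [sum_sum_mul_inner_eq_norm_sq s (fun i => w i - v i) f]
  exact pow_le_pow_left₀ (norm_nonneg _) hnorm 2

end InnerProductSpace

/-- If the projected (Nyström) embedding difference of two probability
weight vectors is at most `εLP` and each Nyström feature residual is at most `εnys`, then
the embedding difference for the exact feature map is at most `2 εnys + εLP`; equivalently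
the quadratic form of `w − v` with respect to the Gram matrix is at most
`(2 εnys + εLP)²`. -/
theorem stmt_4
    {H : Type*} [NormedAddCommGroup H] [InnerProductSpace ℝ H]
    {X : Type*} (Φ : X → H)
    (V : Submodule ℝ H) [FiniteDimensional ℝ V]
    {N : ℕ} (x : Fin N → X) (w v : Fin N → ℝ)
    (hw : ∀ i, 0 ≤ w i) (hw1 : ∑ i, w i = 1)
    (hv : ∀ i, 0 ≤ v i) (hv1 : ∑ i, v i = 1)
    (εLP εnys : ℝ)
    (hLP : ‖∑ i, (w i - v i) • (Submodule.orthogonalProjectionOnto V (Φ (x i)) : H)‖ ≤ εLP)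
    (hnys : ∀ i, ‖Φ (x i) - (Submodule.orthogonalProjectionOnto V (Φ (x i)) : H)‖ ≤ εnys) :
    ‖∑ i, (w i - v i) • Φ (x i)‖ ≤ 2 * εnys + εLP ∧
      ∑ i, ∑ j, (w i - v i) * (w j - v j) * ⟪Φ (x i), Φ (x j)⟫
        ≤ (2 * εnys + εLP) ^ 2 := by
  simpa only [hw1, hv1, one_add_one_eq_two] using
    stmt_4_general (fun i _ => hw i) (fun i _ => hv i) hLP (fun i _ => hnys i)
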